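/- For ψ ∈ (−π/4, 0] set k = cos 2ψ > 0 and S = 2ψ + π/2, and define X_P^ψ : ℝ² → ℝ³ by X_P^ψ(u,v) = ( [u·cos ψ·√k − sin ψ·sin((u + S)√k)·cosh(v√k)]/√k, [v·sin ψ·√k − cos ψ·cos((u + S)√k)·sinh(v√k)]/√k, cos((u + S)√k)·cosh(v√k) ). Then for every fixed (u,v) ∈ ℝ², the limit as ψ → (−π/4)⁺ exists and lim_{ψ→(−π/4)⁺} X_P^ψ(u,v) = (√2·u, −√2·v, 1). (This is the continuous deformation from the maximal catenoid with spacelike axis, at ψ = 0, to the spacelike plane {x₀ = 1}.) -/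

import Mathlib

open Real Filter Topology

/-- The deformation family X_P^ψ joining the maximal catenoid with spacelike axis
(ψ = 0) to the spacelike plane, where k = cos 2ψ and S = 2ψ + π/2. -/
noncomputable def XP (ψ u v : ℝ) : ℝ × ℝ × ℝ :=
  let k := Real.cos (2 * ψ)
  let S := 2 * ψ + π / 2
  ((u * Real.cos ψ * Real.sqrt k
      - Real.sin ψ * Real.sin ((u + S) * Real.sqrt k) * Real.cosh (v * Real.sqrt k))
      / Real.sqrt k,
   (v * Real.sin ψ * Real.sqrt k
      - Real.cos ψ * Real.cos ((u + S) * Real.sqrt k) * Real.sinh (v * Real.sqrt k))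
      / Real.sqrt k,
   Real.cos ((u + S) * Real.sqrt k) * Real.cosh (v * Real.sqrt k))

/-- `f x = x * g x` with `g` continuous, for `f` with `f 0 = 0` and derivative 1 at 0. -/
theorem XP_factor (f : ℝ → ℝ) (hf : Differentiable ℝ f) (h0 : f 0 = 0) (h1 : deriv f 0 = 1) :
    ∃ g : ℝ → ℝ, Continuous g ∧ g 0 = 1 ∧ ∀ x, f x = x * g x := by
  refine ⟨dslope f 0, ?_, ?_, ?_⟩
  · rw [continuous_iff_continuousAt]
    intro x
    by_cases hx : x = 0
    · subst hx
      exact continuousAt_dslope_same.2 (hf 0)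
    · exact (continuousAt_dslope_of_ne hx).2 (hf x).continuousAt
  · rw [dslope_same, h1]
  · intro x
    have h := sub_smul_dslope f 0 x
    simp only [sub_zero, smul_eq_mul, h0] at h
    exact h.symm

/-- At every fixed (u,v), X_P^ψ(u,v) converges as ψ → (−π/4)⁺ to
(√2·u, −√2·v, 1), a parametrization of the spacelike plane {x₀ = 1}. -/
theorem XP_tendsto_plane (u v : ℝ) :
    Tendsto (fun ψ : ℝ => XP ψ u v) (𝓝[>] (-(π / 4)))
      (𝓝 (Real.sqrt 2 * u, -(Real.sqrt 2 * v), 1)) := by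
  obtain ⟨g, gc, g0, hg⟩ := XP_factor Real.sin Real.differentiable_sin (by simp) (by simp)
  obtain ⟨h, hc, h0, hh⟩ := XP_factor Real.sinh Real.differentiable_sinh (by simp) (by simp)
  have key : Tendsto (fun ψ : ℝ =>
      ((u * Real.cos ψ - Real.sin ψ * ((u + (2 * ψ + π / 2)) *
          g ((u + (2 * ψ + π / 2)) * Real.sqrt (Real.cos (2 * ψ))))
          * Real.cosh (v * Real.sqrt (Real.cos (2 * ψ))),
        v * Real.sin ψ - Real.cos ψ *
          Real.cos ((u + (2 * ψ + π / 2)) * Real.sqrt (Real.cos (2 * ψ)))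
          * (v * h (v * Real.sqrt (Real.cos (2 * ψ)))),
        Real.cos ((u + (2 * ψ + π / 2)) * Real.sqrt (Real.cos (2 * ψ)))
          * Real.cosh (v * Real.sqrt (Real.cos (2 * ψ)))) : ℝ × ℝ × ℝ))
      (𝓝 (-(π / 4))) (𝓝 (Real.sqrt 2 * u, -(Real.sqrt 2 * v), 1)) := by
    refine Continuous.tendsto' (by fun_prop) _ _ ?_
    have e1 : 2 * -(π / 4) = -(π / 2) := by ring
    simp only [e1, Real.cos_neg, Real.sin_neg, Real.cos_pi_div_two, Real.sqrt_zero, mul_zero,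
      g0, h0, Real.cos_pi_div_four, Real.sin_pi_div_four, Real.cos_zero, Real.cosh_zero,
      Prod.mk.injEq]
    refine ⟨by ring, by ring, by ring⟩
  refine (key.mono_left nhdsWithin_le_nhds).congr' ?_
  have hI : Set.Ioo (-(π / 4)) 0 ∈ 𝓝[>] (-(π / 4)) :=
    Ioo_mem_nhdsGT (by linarith [Real.pi_pos])
  filter_upwards [hI] with ψ hψ
  have hk : 0 < Real.cos (2 * ψ) :=
    Real.cos_pos_of_mem_Ioo ⟨by linarith [hψ.1], by linarith [hψ.2, Real.pi_pos]⟩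
  have hs : Real.sqrt (Real.cos (2 * ψ)) ≠ 0 := (Real.sqrt_pos.2 hk).ne'
  simp only [XP, Prod.mk.injEq]
  refine ⟨?_, ?_, trivial⟩
  · rw [hg ((u + (2 * ψ + π / 2)) * Real.sqrt (Real.cos (2 * ψ))), eq_div_iff hs]
    ring
  · rw [hh, eq_div_iff hs]
    ring
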